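/- Let H be a Berge-K4-saturated 3-uniform hypergraph on n ≥ 7 vertices with the minimum number of hyperedges (so in particular e(H) ≤ n). Then H has no isolated vertex, i.e., every vertex has degree at least 1. -/

import Mathlib

variable {V : Type*} [DecidableEq V]

/-- A Berge-K4 in the hyperedge set `E` with core vertices `a,b,c,d`:
four distinct vertices together with six distinct hyperedges, one assigned
to each pair of core vertices, each containing its assigned pair. -/
def IsBergeK4Core (E : Finset (Finset V)) (a b c d : V) : Prop :=
  a ≠ b ∧ a ≠ c ∧ a ≠ d ∧ b ≠ c ∧ b ≠ d ∧ c ≠ d ∧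
  ∃ fab fac fad fbc fbd fcd : Finset V,
    fab ∈ E ∧ fac ∈ E ∧ fad ∈ E ∧ fbc ∈ E ∧ fbd ∈ E ∧ fcd ∈ E ∧
    ([fab, fac, fad, fbc, fbd, fcd] : List (Finset V)).Nodup ∧
    a ∈ fab ∧ b ∈ fab ∧ a ∈ fac ∧ c ∈ fac ∧ a ∈ fad ∧ d ∈ fad ∧
    b ∈ fbc ∧ c ∈ fbc ∧ b ∈ fbd ∧ d ∈ fbd ∧ c ∈ fcd ∧ d ∈ fcd

/-- `E` contains a Berge-K4. -/
def IsBergeK4 (E : Finset (Finset V)) : Prop :=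
  ∃ a b c d : V, IsBergeK4Core E a b c d

/-- Every hyperedge has exactly 3 vertices. -/
def Is3Uniform (E : Finset (Finset V)) : Prop := ∀ e ∈ E, e.card = 3

/-- The degree of a vertex: the number of hyperedges containing it. -/
def hdeg (E : Finset (Finset V)) (v : V) : ℕ := (E.filter fun e => v ∈ e).card

/-- A 3-uniform Berge-K4-saturated hypergraph on the (finite) vertex type `V`:
it is 3-uniform, Berge-K4-free, and adding any non-hyperedge (3-element subset
of the vertices not already a hyperedge) creates a Berge-K4. -/
def IsSaturated [Fintype V] (E : Finset (Finset V)) : Prop :=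
  Is3Uniform E ∧ ¬ IsBergeK4 E ∧
    ∀ e : Finset V, e.card = 3 → e ∉ E → IsBergeK4 (insert e E)

/-- The pair `(u,v)` is good: there are two further vertices `x,y` (so that
`u,v,x,y` are four distinct vertices) and five distinct hyperedges, one for
each pair among `u,v,x,y` other than `uv`, each containing its assigned pair;
i.e. adding an edge on `{u,v}` completes a Berge-K4 with core `{u,v,x,y}`. -/
def GoodPair (E : Finset (Finset V)) (u v : V) : Prop :=
  ∃ x y : V, u ≠ v ∧ u ≠ x ∧ u ≠ y ∧ v ≠ x ∧ v ≠ y ∧ x ≠ y ∧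
  ∃ eux euy evx evy exy : Finset V,
    eux ∈ E ∧ euy ∈ E ∧ evx ∈ E ∧ evy ∈ E ∧ exy ∈ E ∧
    ([eux, euy, evx, evy, exy] : List (Finset V)).Nodup ∧
    u ∈ eux ∧ x ∈ eux ∧ u ∈ euy ∧ y ∈ euy ∧
    v ∈ evx ∧ x ∈ evx ∧ v ∈ evy ∧ y ∈ evy ∧
    x ∈ exy ∧ y ∈ exy

section BergeK4

variable {E : Finset (Finset V)}

theorem Finset.eq_triple_of_mem {e : Finset V} (he : e.card = 3) {a b c : V} (ha : a ∈ e)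
    (hb : b ∈ e) (hc : c ∈ e) (hab : a ≠ b) (hac : a ≠ c) (hbc : b ≠ c) : e = {a, b, c} := by
  refine (Finset.eq_of_subset_of_card_le (by grind) ?_).symm
  rw [he, Finset.card_eq_three.2 ⟨a, b, c, hab, hac, hbc, rfl⟩]

theorem Finset.exists_eq_triple {e : Finset V} (he : e.card = 3) {a b : V} (ha : a ∈ e)
    (hb : b ∈ e) (hab : a ≠ b) : ∃ c, c ≠ a ∧ c ≠ b ∧ e = {a, b, c} := by
  obtain ⟨c, hc⟩ : ∃ c, c ∈ e \ {a, b} := by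
    refine Finset.card_pos.1 ?_
    have h1 := Finset.le_card_sdiff {a, b} e
    have h2 := Finset.card_le_two (a := a) (b := b)
    omega
  simp only [Finset.mem_sdiff, Finset.mem_insert, Finset.mem_singleton, not_or] at hc
  exact ⟨c, hc.2.1, hc.2.2, Finset.eq_triple_of_mem he ha hb hc.1 hab (Ne.symm hc.2.1)
    (Ne.symm hc.2.2)⟩

omit [DecidableEq V] in
theorem IsBergeK4Core.exists_three_edges {a b c d v : V} (h : IsBergeK4Core E a b c d)
    (hv : v = a ∨ v = b ∨ v = c ∨ v = d) :
    ∃ f ∈ E, ∃ g ∈ E, ∃ k ∈ E, f ≠ g ∧ f ≠ k ∧ g ≠ k ∧ v ∈ f ∧ v ∈ g ∧ v ∈ k := by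
  obtain ⟨-, -, -, -, -, -, fab, fac, fad, fbc, fbd, fcd, h1, h2, h3, h4, h5, h6, hnd,
    m1, m2, m3, m4, m5, m6, m7, m8, m9, m10, m11, m12⟩ := h
  simp only [List.nodup_cons, List.mem_cons, List.not_mem_nil, not_or] at hnd
  rcases hv with rfl | rfl | rfl | rfl
  · exact ⟨fab, h1, fac, h2, fad, h3, by tauto⟩
  · exact ⟨fab, h1, fbc, h4, fbd, h5, by tauto⟩
  · exact ⟨fac, h2, fbc, h4, fcd, h6, by tauto⟩
  · exact ⟨fad, h3, fbd, h5, fcd, h6, by tauto⟩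

omit [DecidableEq V] in
theorem GoodPair.mono {E' : Finset (Finset V)} (hE : E ⊆ E') {u v : V} (h : GoodPair E u v) :
    GoodPair E' u v := by
  obtain ⟨x, y, h1, h2, h3, h4, h5, h6, a, b, c, d, e, ha, hb, hc, hd, he, h⟩ := h
  exact ⟨x, y, h1, h2, h3, h4, h5, h6, a, b, c, d, e, hE ha, hE hb, hE hc, hE hd, hE he, h⟩

omit [DecidableEq V] in
theorem GoodPair.symm {u v : V} (h : GoodPair E u v) : GoodPair E v u := by
  obtain ⟨x, y, h1, h2, h3, h4, h5, h6, a, b, c, d, e, ha, hb, hc, hd, he, h⟩ := h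
  refine ⟨x, y, h1.symm, h4, h5, h2, h3, h6, c, d, a, b, e, hc, hd, ha, hb, he, ?_⟩
  simp only [List.nodup_cons, List.mem_cons, List.not_mem_nil, not_or] at h ⊢
  tauto

theorem GoodPair.isBergeK4_insert {u v : V} (h : GoodPair E u v) {e : Finset V} (he : e ∉ E)
    (hu : u ∈ e) (hv : v ∈ e) : IsBergeK4 (insert e E) := by
  obtain ⟨x, y, h1, h2, h3, h4, h5, h6, a, b, c, d, f, ha, hb, hc, hd, hf, hnd, h⟩ := h
  refine ⟨u, v, x, y, h1, h2, h3, h4, h5, h6, e, a, b, c, d, f, by simp, by simp [ha],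
    by simp [hb], by simp [hc], by simp [hd], by simp [hf], ?_, by tauto⟩
  rw [List.nodup_cons]
  exact ⟨by simp only [List.mem_cons, List.not_mem_nil]; grind, hnd⟩

theorem GoodPair.of_core {e : Finset V} {p q x y : V} {fpx fpy fqx fqy fxy : Finset V}
    (hpq : p ≠ q) (hpx : p ≠ x) (hpy : p ≠ y) (hqx : q ≠ x) (hqy : q ≠ y) (hxy : x ≠ y)
    (k1 : fpx ∈ insert e E) (k2 : fpy ∈ insert e E) (k3 : fqx ∈ insert e E)
    (k4 : fqy ∈ insert e E) (k5 : fxy ∈ insert e E) (hnd : [e, fpx, fpy, fqx, fqy, fxy].Nodup)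
    (m : p ∈ fpx ∧ x ∈ fpx ∧ p ∈ fpy ∧ y ∈ fpy ∧
      q ∈ fqx ∧ x ∈ fqx ∧ q ∈ fqy ∧ y ∈ fqy ∧ x ∈ fxy ∧ y ∈ fxy) :
    GoodPair E p q := by
  rw [List.nodup_cons] at hnd
  have mem_of {g : Finset V} (hg : g ∈ insert e E) (hl : g ∈ [fpx, fpy, fqx, fqy, fxy]) : g ∈ E :=
    (Finset.mem_insert.1 hg).resolve_left fun h => hnd.1 (h ▸ hl)
  exact ⟨x, y, hpq, hpx, hpy, hqx, hqy, hxy, fpx, fpy, fqx, fqy, fxy,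
    mem_of k1 (by simp), mem_of k2 (by simp), mem_of k3 (by simp), mem_of k4 (by simp),
    mem_of k5 (by simp), hnd.2, m⟩

theorem exists_goodPair_of_isBergeK4_insert {e : Finset V} (hE : ¬ IsBergeK4 E)
    (h : IsBergeK4 (insert e E)) : ∃ p ∈ e, ∃ q ∈ e, GoodPair E p q := by
  obtain ⟨a, b, c, d, n1, n2, n3, n4, n5, n6, fab, fac, fad, fbc, fbd, fcd, h1, h2, h3, h4, h5, h6,
    hnd, m1, m2, m3, m4, m5, m6, m7, m8, m9, m10, m11, m12⟩ := h
  have perm {l : List (Finset V)}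
      (hl : ∀ g, l.count g = [fab, fac, fad, fbc, fbd, fcd].count g) : l.Nodup :=
    (List.perm_iff_count.2 hl).nodup_iff.2 hnd
  by_cases e1 : fab = e
  · subst e1
    exact ⟨a, m1, b, m2, .of_core n1 n2 n3 n4 n5 n6 h2 h3 h4 h5 h6 hnd (by tauto)⟩
  by_cases e2 : fac = e
  · subst e2
    exact ⟨a, m3, c, m4, .of_core n2 n1 n3 n4.symm n6 n5 h1 h3 h4 h6 h5
      (perm (by intro; simp only [List.count_cons, List.count_nil]; omega)) (by tauto)⟩
  by_cases e3 : fad = e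
  · subst e3
    exact ⟨a, m5, d, m6, .of_core n3 n1 n2 n5.symm n6.symm n4 h1 h2 h5 h6 h4
      (perm (by intro; simp only [List.count_cons, List.count_nil]; omega)) (by tauto)⟩
  by_cases e4 : fbc = e
  · subst e4
    exact ⟨b, m7, c, m8, .of_core n4 n1.symm n5 n2.symm n6 n3 h1 h5 h2 h6 h3
      (perm (by intro; simp only [List.count_cons, List.count_nil]; omega)) (by tauto)⟩
  by_cases e5 : fbd = e
  · subst e5
    exact ⟨b, m9, d, m10, .of_core n5 n1.symm n4 n3.symm n6.symm n2 h1 h4 h3 h6 h2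
      (perm (by intro; simp only [List.count_cons, List.count_nil]; omega)) (by tauto)⟩
  by_cases e6 : fcd = e
  · subst e6
    exact ⟨c, m11, d, m12, .of_core n6 n2.symm n4.symm n3.symm n5.symm n1 h2 h4 h3 h5 h1
      (perm (by intro; simp only [List.count_cons, List.count_nil]; omega)) (by tauto)⟩
  simp only [Finset.mem_insert] at h1 h2 h3 h4 h5 h6
  exact absurd ⟨a, b, c, d, n1, n2, n3, n4, n5, n6, fab, fac, fad, fbc, fbd, fcd,
    h1.resolve_left e1, h2.resolve_left e2, h3.resolve_left e3, h4.resolve_left e4,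
    h5.resolve_left e5, h6.resolve_left e6, hnd, m1, m2, m3, m4, m5, m6, m7, m8, m9, m10, m11,
    m12⟩ hE

/-! ### The local structure of hypergraphs in which pairs inside hyperedges are good -/

/-- If `{p, q, a}` is a hyperedge and `(p, q)` is good, then that hyperedge takes part in every
configuration making `(p, q)` good. -/
theorem GoodPair.exists_config (h3 : Is3Uniform E) (hfree : ¬ IsBergeK4 E) {p q a : V}
    (hpa : p ≠ a) (hqa : q ≠ a) (hg : GoodPair E p q) (he : {p, q, a} ∈ E) :
    ∃ y, y ≠ p ∧ y ≠ q ∧ y ≠ a ∧ ∃ fpa ∈ E, ∃ fqa ∈ E, ∃ fpy ∈ E, ∃ fqy ∈ E, ∃ fay ∈ E,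
      [fpa, fqa, fpy, fqy, fay].Nodup ∧ p ∈ fpa ∧ a ∈ fpa ∧ q ∈ fqa ∧ a ∈ fqa ∧ p ∈ fpy ∧ y ∈ fpy ∧
      q ∈ fqy ∧ y ∈ fqy ∧ a ∈ fay ∧ y ∈ fay ∧ (fpa = {p, q, a} ∨ fqa = {p, q, a}) ∧
      ∀ h ∈ E, p ∈ h → q ∈ h → h = fpa ∨ h = fqa ∨ h = fpy ∨ h = fqy := by
  obtain ⟨x, y, hpq, hpx, hpy, hqx, hqy, hxy, fpx, fpy, fqx, fqy, fxy, k1, k2, k3, k4, k5, hnd,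
    m1, m2, m3, m4, m5, m6, m7, m8, m9, m10⟩ := hg
  have key : ∀ h ∈ E, p ∈ h → q ∈ h → h = fpx ∨ h = fpy ∨ h = fqx ∨ h = fqy := by
    intro h hh hp hq
    by_contra! hne
    refine hfree ⟨p, q, x, y, hpq, hpx, hpy, hqx, hqy, hxy, h, fpx, fpy, fqx, fqy, fxy, hh, k1, k2,
      k3, k4, k5, ?_, hp, hq, m1, m2, m3, m4, m5, m6, m7, m8, m9, m10⟩
    rw [List.nodup_cons]
    refine ⟨?_, hnd⟩
    have : h ≠ fxy := by
      rintro rfl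
      have := Finset.eq_triple_of_mem (h3 _ hh) hp hq m9 hpq hpx hqx
      grind
    simp only [List.mem_cons, List.not_mem_nil]
    tauto
  simp only [List.nodup_cons, List.mem_cons, List.not_mem_nil, not_or] at hnd ⊢
  obtain ⟨hr, rfl⟩ | ⟨hr, rfl⟩ : (fpx = {p, q, a} ∨ fqx = {p, q, a}) ∧ x = a ∨
      (fpy = {p, q, a} ∨ fqy = {p, q, a}) ∧ y = a := by
    have := key _ he (by simp) (by simp)
    grind
  · exact ⟨y, by grind, by grind, by grind, fpx, k1, fqx, k3, fpy, k2, fqy, k4, fxy, k5, by grind⟩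
  · exact ⟨x, by grind, by grind, by grind, fpy, k2, fqy, k4, fpx, k1, fqx, k3, fxy, k5, by grind⟩

theorem Finset.triple_rotate (a b c : V) : ({a, b, c} : Finset V) = {b, c, a} := by
  ext
  simp
  tauto

theorem Finset.triple_reverse (a b c : V) : ({a, b, c} : Finset V) = {c, b, a} := by
  ext
  simp
  tauto

/-- `a`, `b`, `c` are the three vertices of a hyperedge. -/
def IsTriangle (E : Finset (Finset V)) (a b c : V) : Prop :=
  a ≠ b ∧ a ≠ c ∧ b ≠ c ∧ {a, b, c} ∈ E

theorem IsTriangle.rotate {a b c : V} (h : IsTriangle E a b c) : IsTriangle E b c a := by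
  obtain ⟨h1, h2, h3, h⟩ := h
  refine ⟨h3, h1.symm, h2.symm, ?_⟩
  rwa [← Finset.triple_rotate]

theorem IsTriangle.swap {a b c : V} (h : IsTriangle E a b c) : IsTriangle E b a c := by
  obtain ⟨h1, h2, h3, h⟩ := h
  exact ⟨h1.symm, h3, h2, by rwa [Finset.insert_comm]⟩

theorem IsTriangle.mem_filter {u x y : V} (h : IsTriangle E u x y) :
    {u, x, y} ∈ E.filter fun e => u ∈ e := by
  simp [h.2.2.2]

theorem IsTriangle.card_path {u a b c d : V} (hac : a ≠ c) (had : a ≠ d) (hbd : b ≠ d)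
    (h1 : IsTriangle E u a b) (h3 : IsTriangle E u c d) :
    ({{u, a, b}, {u, b, c}, {u, c, d}} : Finset (Finset V)).card = 3 := by
  have ne {f g : Finset V} (x : V) (hf : x ∈ f) (hg : x ∉ g) : f ≠ g := by
    rintro rfl
    exact hg hf
  refine Finset.card_eq_three.2 ⟨_, _, _, ne a (by simp) ?_, ne a (by simp) ?_,
    (ne d (by simp) ?_).symm, rfl⟩
  · simp [h1.1.symm, h1.2.2.1, hac]
  · simp [h1.1.symm, had, hac]
  · simp [h3.2.1.symm, hbd.symm, h3.2.2.1.symm]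

theorem IsTriangle.path_subset {u a b c d : V}
    (h1 : IsTriangle E u a b) (h2 : IsTriangle E u b c) (h3 : IsTriangle E u c d) :
    ({{u, a, b}, {u, b, c}, {u, c, d}} : Finset (Finset V)) ⊆ E.filter fun e => u ∈ e := by
  simp only [Finset.insert_subset_iff, Finset.singleton_subset_iff]
  exact ⟨h1.mem_filter, h2.mem_filter, h3.mem_filter⟩

/-- A Berge-K4-free 3-uniform hypergraph in which any two vertices of a common hyperedge form a
good pair. -/
structure IsLocallyGood (E : Finset (Finset V)) : Prop where
  uniform : Is3Uniform E
  free : ¬ IsBergeK4 E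
  good : ∀ e ∈ E, ∀ p ∈ e, ∀ q ∈ e, p ≠ q → GoodPair E p q

namespace IsLocallyGood

variable (hE : IsLocallyGood E)
include hE

theorem exists_isTriangle {e : Finset V} (he : e ∈ E) {a b : V} (ha : a ∈ e) (hb : b ∈ e)
    (hab : a ≠ b) : ∃ c, e = {a, b, c} ∧ IsTriangle E a b c := by
  obtain ⟨c, hca, hcb, rfl⟩ := Finset.exists_eq_triple (hE.uniform e he) ha hb hab
  exact ⟨c, rfl, hab, hca.symm, hcb.symm, he⟩

theorem exists_config {p q a : V} (h : IsTriangle E p q a) :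
    ∃ y, y ≠ p ∧ y ≠ q ∧ y ≠ a ∧ ∃ fpa ∈ E, ∃ fqa ∈ E, ∃ fpy ∈ E, ∃ fqy ∈ E, ∃ fay ∈ E,
      [fpa, fqa, fpy, fqy, fay].Nodup ∧ p ∈ fpa ∧ a ∈ fpa ∧ q ∈ fqa ∧ a ∈ fqa ∧ p ∈ fpy ∧ y ∈ fpy ∧
      q ∈ fqy ∧ y ∈ fqy ∧ a ∈ fay ∧ y ∈ fay ∧ (fpa = {p, q, a} ∨ fqa = {p, q, a}) ∧
      ∀ h ∈ E, p ∈ h → q ∈ h → h = fpa ∨ h = fqa ∨ h = fpy ∨ h = fqy :=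
  (hE.good _ h.2.2.2 p (by simp) q (by simp) h.1).exists_config hE.uniform hE.free h.2.1 h.2.2.1
    h.2.2.2

theorem exists_isTriangle_ne {p q a : V} (h : IsTriangle E p q a) :
    (∃ d, d ≠ q ∧ IsTriangle E p a d) ∨ ∃ d, d ≠ p ∧ IsTriangle E q a d := by
  obtain ⟨y, -, -, -, f, hf, g, hg, _, _, _, _, _, _, hnd, m1, m2, m3, m4, -, -, -, -, -, -, h', -⟩ :=
    hE.exists_config h
  have hne : f ≠ g := by rintro rfl; simp at hnd
  obtain ⟨h1, h2, h3, -⟩ := h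
  rcases h' with rfl | rfl
  · obtain ⟨d, rfl, hd⟩ := hE.exists_isTriangle hg m3 m4 h3
    exact .inr ⟨d, by grind, hd⟩
  · obtain ⟨d, rfl, hd⟩ := hE.exists_isTriangle hf m1 m2 h2
    exact .inl ⟨d, by grind, hd⟩

theorem exists_config_of_two {p q a b : V} (h : IsTriangle E p q a) (h' : IsTriangle E p q b)
    (hab : a ≠ b) :
    ∃ fpa ∈ E, ∃ fqa ∈ E, ∃ fpb ∈ E, ∃ fqb ∈ E, ∃ fab ∈ E,
      [fpa, fqa, fpb, fqb, fab].Nodup ∧ p ∈ fpa ∧ a ∈ fpa ∧ q ∈ fqa ∧ a ∈ fqa ∧ p ∈ fpb ∧ b ∈ fpb ∧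
      q ∈ fqb ∧ b ∈ fqb ∧ a ∈ fab ∧ b ∈ fab ∧ (fpa = {p, q, a} ∨ fqa = {p, q, a}) ∧
      (fpb = {p, q, b} ∨ fqb = {p, q, b}) ∧ ∀ c, IsTriangle E p q c → c = a ∨ c = b := by
  obtain ⟨y, y1, y2, y3, fpa, k1, fqa, k2, fpy, k3, fqy, k4, fay, k5, hnd, m1, m2, m3, m4, m5, m6,
    m7, m8, m9, m10, hf, hall⟩ := hE.exists_config h
  obtain ⟨h1, h2, h3, -⟩ := h
  have key : ∀ c, IsTriangle E p q c → c ≠ a → c = y ∧ (fpy = {p, q, c} ∨ fqy = {p, q, c}) := by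
    rintro c ⟨-, c1, c2, hc⟩ hca
    have := hall _ hc (by simp) (by simp)
    grind
  obtain ⟨rfl, hb⟩ := key b h' hab.symm
  refine ⟨fpa, k1, fqa, k2, fpy, k3, fqy, k4, fay, k5, hnd, m1, m2, m3, m4, m5, m6, m7, m8, m9, m10,
    hf, hb, fun c hc => ?_⟩
  by_contra! hcc
  exact hcc.2 (key c hc hcc.1).1

theorem eq_or_eq {p q a b c : V} (h : IsTriangle E p q a) (h' : IsTriangle E p q b)
    (hab : a ≠ b) (hc : IsTriangle E p q c) : c = a ∨ c = b := by
  obtain ⟨_, _, _, _, _, _, _, _, _, _, -, -, -, -, -, -, -, -, -, -, -, -, -, hall⟩ :=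
    hE.exists_config_of_two h h' hab
  exact hall c hc

theorem exists_isTriangle_opposite {p q a b : V} (h : IsTriangle E p q a)
    (h' : IsTriangle E p q b) (hab : a ≠ b) : ∃ c, IsTriangle E a b c := by
  obtain ⟨_, _, _, _, _, _, _, _, f, hf, -, -, -, -, -, -, -, -, -, ha, hb, -⟩ :=
    hE.exists_config_of_two h h' hab
  obtain ⟨c, -, hc⟩ := hE.exists_isTriangle hf ha hb hab
  exact ⟨c, hc⟩

theorem forall_eq_or_eq {p q a b : V} (h : IsTriangle E p q a) (h' : IsTriangle E p q b)
    (hab : a ≠ b) : (∀ c, IsTriangle E p a c → c = q ∨ c = b) ∨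
      ∀ c, IsTriangle E q a c → c = p ∨ c = b := by
  obtain ⟨fpa, k1, fqa, k2, fpb, k3, fqb, k4, fab, k5, hnd, m1, m2, m3, m4, m5, m6,
    m7, m8, m9, m10, hf, -⟩ := hE.exists_config_of_two h h' hab
  obtain ⟨h1, h2, h3, he⟩ := h
  obtain ⟨-, h4, h5, -⟩ := h'
  rcases hf with rfl | rfl
  · left
    rintro c ⟨-, c1, c2, hc⟩
    by_contra! hcc
    have key {f : Finset V} {x : V} (hx : x ∈ f) (x1 : x ≠ p) (x2 : x ≠ a) (x3 : x ≠ c) :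
        {p, a, c} ≠ f := by rintro rfl; simp_all
    have hmem : {p, a, c} ∉ [{p, q, a}, fqa, fpb, fqb, fab] := by
      simp only [List.mem_cons, List.not_mem_nil, or_false, not_or]
      exact ⟨key (x := q) (by simp) h1.symm h3 hcc.1.symm, key m3 h1.symm h3 hcc.1.symm,
        key m6 h4.symm hab.symm hcc.2.symm, key m7 h1.symm h3 hcc.1.symm,
        key m10 h4.symm hab.symm hcc.2.symm⟩
    refine hE.free ⟨p, q, a, b, h1, h2, h4, h3, h5, hab, {p, q, a}, {p, a, c}, fpb, fqa, fqb, fab,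
      he, hc, k3, k2, k4, k5, ?_, by simp, by simp, by simp, by simp, m5, m6, m3, m4, m7, m8, m9,
      m10⟩
    refine (List.Perm.nodup_iff ?_).2 (List.nodup_cons.2 ⟨hmem, hnd⟩)
    rw [List.perm_iff_count]
    intro
    simp only [List.count_cons, List.count_nil]
    omega
  · right
    rintro c ⟨-, c1, c2, hc⟩
    by_contra! hcc
    have key {f : Finset V} {x : V} (hx : x ∈ f) (x1 : x ≠ q) (x2 : x ≠ a) (x3 : x ≠ c) :
        {q, a, c} ≠ f := by rintro rfl; simp_all
    have hmem : {q, a, c} ∉ [fpa, {p, q, a}, fpb, fqb, fab] := by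
      simp only [List.mem_cons, List.not_mem_nil, or_false, not_or]
      exact ⟨key m1 h1 h2 hcc.1.symm, key (x := p) (by simp) h1 h2 hcc.1.symm,
        key m5 h1 h2 hcc.1.symm, key m8 h5.symm hab.symm hcc.2.symm,
        key m10 h5.symm hab.symm hcc.2.symm⟩
    refine hE.free ⟨p, q, a, b, h1, h2, h4, h3, h5, hab, {p, q, a}, fpa, fpb, {q, a, c}, fqb, fab,
      he, k1, k3, hc, k4, k5, ?_, by simp, by simp, m1, m2, m5, m6, by simp, by simp, m7, m8, m9,
      m10⟩
    refine (List.Perm.nodup_iff ?_).2 (List.nodup_cons.2 ⟨hmem, hnd⟩)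
    rw [List.perm_iff_count]
    intro
    simp only [List.count_cons, List.count_nil]
    omega

theorem false_of_cone_of_two_sides {u w z y r s : V} (h1 : IsTriangle E u w z)
    (h2 : IsTriangle E u w y) (h3 : IsTriangle E u z y) (hr : IsTriangle E w y r) (hru : r ≠ u)
    (hs : IsTriangle E z y s) (hsu : s ≠ u) (hne : ({w, y, r} : Finset V) ≠ {z, y, s}) : False := by
  have hrz : r ≠ z := by
    rintro rfl
    have hsw : s ≠ w := by rintro rfl; exact hne (by grind)
    have := hE.eq_or_eq h3.rotate hr.rotate.swap h1.1 hs
    tauto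
  have := h1.2.2.1
  have := h1.1
  have := h3.2.2.1
  rcases hE.forall_eq_or_eq h2.rotate hr hru.symm with h | h
  · have := h z h1.swap
    tauto
  · have := h z h3.rotate.rotate
    tauto

theorem not_isTriangle_of_two {u w z y : V} (h1 : IsTriangle E u w z) (h2 : IsTriangle E u w y)
    (hzy : z ≠ y) : ¬ IsTriangle E u z y := by
  intro h3
  obtain ⟨fuz, k1, fwz, k2, fuy, k3, fwy, k4, fzy, k5, hnd, m1, m2, m3, m4, m5, m6,
    m7, m8, m9, m10, -⟩ := hE.exists_config_of_two h1 h2 hzy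
  have uw := h1.1
  have uz := h1.2.1
  have wz := h1.2.2.1
  have uy := h2.2.1
  have wy := h2.2.2.1
  obtain ⟨t, rfl, ht⟩ := hE.exists_isTriangle k1 m1 m2 uz
  obtain ⟨t', rfl, ht'⟩ := hE.exists_isTriangle k3 m5 m6 uy
  obtain ⟨a, rfl, ha⟩ := hE.exists_isTriangle k2 m3 m4 wz
  obtain ⟨b, rfl, hb⟩ := hE.exists_isTriangle k4 m7 m8 wy
  obtain ⟨c, rfl, hc⟩ := hE.exists_isTriangle k5 m9 m10 hzy
  have hnd' := hnd
  simp only [List.nodup_cons, List.mem_cons, List.not_mem_nil, or_false, not_or] at hnd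
  obtain ⟨⟨n1, n2, n3, n4⟩, ⟨n5, n6, n7⟩, ⟨n8, n9⟩, n10, -⟩ := hnd
  rcases hE.eq_or_eq h1.swap.rotate h3 wy ht with rfl | rfl <;>
    rcases hE.eq_or_eq h2.swap.rotate h3.swap.rotate wz ht' with rfl | rfl
  · have hau : a ≠ u := by rintro rfl; exact n1 (Finset.triple_reverse ..)
    have hbu : b ≠ u := by rintro rfl; exact n8 (Finset.triple_reverse ..)
    by_cases hcu : c = u
    · exact hE.false_of_cone_of_two_sides h3.swap.rotate h2.swap.rotate h1.swap.rotate hb.swap hbu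
        ha.swap hau (by rw [Finset.insert_comm, Finset.insert_comm z]; exact Ne.symm n6)
    · have key {f : Finset V} {x : V} (hx : x ∈ f) (x1 : x ≠ u) (x2 : x ≠ z) (x3 : x ≠ y) :
          {u, z, y} ≠ f := by rintro rfl; simp_all
      have hmem : ({u, z, y} : Finset V) ∉ [{u, z, t'}, {t', z, a}, {u, y, t'}, {t', y, b}, {z, y, c}] := by
        simp only [List.mem_cons, List.not_mem_nil, or_false, not_or]
        refine ⟨key (x := t') (by simp) uw.symm wz wy, key (x := t') (by simp) uw.symm wz wy,
          key (x := t') (by simp) uw.symm wz wy, key (x := t') (by simp) uw.symm wz wy,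
          key (x := c) (by simp) hcu hc.2.1.symm hc.2.2.1.symm⟩
      refine hE.free ⟨u, t', z, y, uw, uz, uy, wz, wy, hzy, {u, z, t'}, {u, z, y}, {u, y, t'},
        {t', z, a}, {t', y, b}, {z, y, c}, k1, h3.2.2.2, k3, k2, k4, k5, ?_, by simp⟩
      refine (List.Perm.nodup_iff ?_).2 (List.nodup_cons.2 ⟨hmem, hnd'⟩)
      rw [List.perm_iff_count]
      intro
      simp only [List.count_cons, List.count_nil]
      omega
  · have hau : a ≠ u := by rintro rfl; exact n1 (Finset.triple_reverse ..)
    have hcu : c ≠ u := by rintro rfl; exact n9 (Finset.triple_reverse ..)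
    exact hE.false_of_cone_of_two_sides h2 h1 h3.swap.rotate ha hau hc.swap hcu
      (by rw [Finset.insert_comm y]; exact n7)
  · have hbu : b ≠ u := by rintro rfl; exact n8 (Finset.triple_reverse ..)
    have hcu : c ≠ u := by rintro rfl; exact n4 (Finset.triple_rotate ..)
    exact hE.false_of_cone_of_two_sides h1 h2 h3 hb hbu hc hcu n10
  · exact n2 (by rw [Finset.pair_comm])

theorem forall_eq_or_forall_eq {p q a b : V} (h : IsTriangle E p q a) (h' : IsTriangle E p q b)
    (hab : a ≠ b) : (∀ c, IsTriangle E p a c → c = q) ∨ ∀ c, IsTriangle E q a c → c = p := by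
  refine (hE.forall_eq_or_eq h h' hab).imp (fun H c hc => ?_) (fun H c hc => ?_)
  · exact (H c hc).resolve_right fun hcb => hE.not_isTriangle_of_two h h' hab (hcb ▸ hc)
  · exact (H c hc).resolve_right fun hcb => hE.not_isTriangle_of_two h.swap h'.swap hab (hcb ▸ hc)

theorem exists_boundary {p q a : V} (h : IsTriangle E p q a) :
    (∀ c, IsTriangle E p q c → c = a) ∨ (∀ c, IsTriangle E p a c → c = q) ∨
      ∀ c, IsTriangle E q a c → c = p := by
  by_cases! H : ∀ c, IsTriangle E p q c → c = a
  · exact .inl H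
  · obtain ⟨b, hb, hba⟩ := H
    exact .inr (hE.forall_eq_or_forall_eq h hb hba.symm)

theorem exists_path_or_four_le {u : V} {e : Finset V} (he : e ∈ E) (hu : u ∈ e) :
    (∃ a b c d, a ≠ c ∧ a ≠ d ∧ b ≠ d ∧ IsTriangle E u a b ∧ IsTriangle E u b c ∧
      IsTriangle E u c d) ∨ 4 ≤ hdeg E u := by
  obtain ⟨w, z, y, hwy, hw, hy⟩ : ∃ w z y, w ≠ y ∧ IsTriangle E u z w ∧ IsTriangle E u z y := by
    obtain ⟨a, ha, hau⟩ := Finset.exists_mem_ne (by rw [hE.uniform e he]; decide) u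
    obtain ⟨b, rfl, h⟩ := hE.exists_isTriangle he hu ha hau.symm
    rcases hE.exists_isTriangle_ne h.rotate with ⟨d, hd, h'⟩ | ⟨d, hd, h'⟩
    · exact ⟨b, a, d, hd.symm, h, h'.swap⟩
    · exact ⟨a, b, d, hd.symm, h.swap.rotate, h'.swap⟩
  have hwyn := hE.not_isTriangle_of_two hw hy hwy
  by_cases! hw' : ∃ c, IsTriangle E u w c ∧ c ≠ z
  · obtain ⟨c, hc, hcz⟩ := hw'
    have hcy : c ≠ y := by rintro rfl; exact hwyn hc
    exact .inl ⟨y, z, w, c, hwy.symm, hcy.symm, hcz.symm, hy.swap.rotate, hw, hc⟩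
  by_cases! hy' : ∃ c, IsTriangle E u y c ∧ c ≠ z
  · obtain ⟨c, hc, hcz⟩ := hy'
    have hcw : c ≠ w := by rintro rfl; exact hwyn hc.swap.rotate
    exact .inl ⟨w, z, y, c, hwy, hcw.symm, hcz.symm, hw.swap.rotate, hy, hc⟩
  right
  obtain ⟨t, htu, ht⟩ : ∃ t, t ≠ u ∧ IsTriangle E z w t := by
    rcases hE.exists_isTriangle_ne hw with ⟨d, hd, h⟩ | h
    · exact absurd (hw' d h) hd
    · exact h
  obtain ⟨c, hc⟩ := hE.exists_isTriangle_opposite hw.rotate ht htu.symm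
  have hty : t ≠ y := by rintro rfl; exact hE.not_isTriangle_of_two hw.swap hy.swap hwy ht
  have htw := ht.2.2.1.symm
  have htz := ht.2.1.symm
  have key {x : V} (hx : IsTriangle E u t x) : x ≠ w ∧ x ≠ z ∧ x ≠ y := by
    refine ⟨?_, ?_, ?_⟩ <;> rintro rfl
    · exact htz (hw' t hx.swap.rotate)
    · exact (hE.eq_or_eq hw hy hwy hx.swap.rotate).elim htw hty
    · exact htz (hy' t hx.swap.rotate)
  have ne {f g : Finset V} (x : V) (hf : x ∈ f) (hg : x ∉ g) : f ≠ g := by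
    rintro rfl
    exact hg hf
  have four {f : Finset V} (hf : f ∈ E.filter fun e => u ∈ e) (h1 : f ≠ {u, z, w})
      (h2 : f ≠ {u, z, y}) (h3 : f ≠ {u, t, c}) : 4 ≤ hdeg E u := by
    have hcard : ({f, {u, z, w}, {u, z, y}, {u, t, c}} : Finset (Finset V)).card = 4 := by
      have h12 : ({u, z, w} : Finset V) ≠ {u, z, y} :=
        ne w (by simp) (by simp [hw.2.1.symm, hw.2.2.1.symm, hwy])
      have h13 : ({u, z, w} : Finset V) ≠ {u, t, c} :=
        (ne t (by simp) (by simp [htu, htz, htw])).symm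
      have h23 : ({u, z, y} : Finset V) ≠ {u, t, c} :=
        (ne t (by simp) (by simp [htu, htz, hty])).symm
      simp [h1, h2, h3, h12, h13, h23]
    rw [← hcard]
    refine Finset.card_le_card ?_
    simp only [Finset.insert_subset_iff, Finset.singleton_subset_iff]
    exact ⟨hf, hw.mem_filter, hy.mem_filter, hc.mem_filter⟩
  obtain ⟨kw, kz, ky⟩ := key hc
  rcases hE.exists_isTriangle_ne hc.rotate with ⟨d, hd, h⟩ | ⟨d, hd, h⟩
  · exact four h.swap.mem_filter (ne t (by simp) (by simp [htu, htz, htw]))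
      (ne t (by simp) (by simp [htu, htz, hty]))
      (ne d (by simp) (by simp [hd, h.2.1.symm, h.2.2.1.symm]))
  · have hcu := h.1
    exact four h.swap.mem_filter (ne c (by simp) (by simp [hcu, kw, kz]))
      (ne c (by simp) (by simp [hcu, kz, ky]))
      (ne d (by simp) (by simp [hd, h.2.1.symm, h.2.2.1.symm]))

theorem three_le_hdeg {u : V} {e : Finset V} (he : e ∈ E) (hu : u ∈ e) : 3 ≤ hdeg E u := by
  rcases hE.exists_path_or_four_le he hu with ⟨a, b, c, d, hac, had, hbd, h1, h2, h3⟩ | h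
  · rw [← IsTriangle.card_path hac had hbd h1 h3]
    exact Finset.card_le_card (h1.path_subset h2 h3)
  · omega

theorem exists_path_of_hdeg_le {u : V} {e : Finset V} (he : e ∈ E) (hu : u ∈ e)
    (hdeg : hdeg E u ≤ 3) : ∃ a b c d, a ≠ c ∧ a ≠ d ∧ b ≠ d ∧ IsTriangle E u a b ∧
      IsTriangle E u b c ∧ IsTriangle E u c d ∧
      ∀ e ∈ E, u ∈ e → e = {u, a, b} ∨ e = {u, b, c} ∨ e = {u, c, d} := by
  rcases hE.exists_path_or_four_le he hu with ⟨a, b, c, d, hac, had, hbd, h1, h2, h3⟩ | h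
  · refine ⟨a, b, c, d, hac, had, hbd, h1, h2, h3, ?_⟩
    intro f hf huf
    have := Finset.eq_of_subset_of_card_le (h1.path_subset h2 h3)
      (by rwa [IsTriangle.card_path hac had hbd h1 h3])
    have hmem : f ∈ E.filter fun e => u ∈ e := by simp [hf, huf]
    simpa [← this] using hmem
  · omega

theorem exists_band {u : V} {e : Finset V} (he : e ∈ E) (hu : u ∈ e) (hdeg : hdeg E u ≤ 3) :
    ∃ (S : Finset V) (B : Finset (Finset V)), S.card = 5 ∧ B.card = 5 ∧ B ⊆ E ∧
      (∀ f ∈ B, f ⊆ S) ∧ u ∈ S ∧ (∀ f ∈ E, u ∈ f → f ∈ B) ∧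
      ∀ f ∈ E, ∀ x ∈ S, ∀ y ∈ S, x ≠ y → x ∈ f → y ∈ f → f ∈ B := by
  obtain ⟨a, b, c, d, hac, had, hbd, h1, h2, h3, hall⟩ := hE.exists_path_of_hdeg_le he hu hdeg
  have ua := h1.1
  have ub := h2.1
  have uc := h3.1
  have ud := h3.2.1
  have hab := h1.2.2.1
  have hbc := h2.2.2.1
  have hcd := h3.2.2.1
  have link {x y : V} (h : IsTriangle E u x y) : (x = a ∧ y = b) ∨ (x = b ∧ y = a) ∨
      (x = b ∧ y = c) ∨ (x = c ∧ y = b) ∨ (x = c ∧ y = d) ∨ (x = d ∧ y = c) := by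
    obtain ⟨ux, uy, xy, h⟩ := h
    have := hall _ h (by simp)
    simp only [Finset.ext_iff, Finset.mem_insert, Finset.mem_singleton] at this
    rcases this with h | h | h
    · have hx := h x
      have hy := h y
      grind only
    · have hx := h x
      have hy := h y
      grind only
    · have hx := h x
      have hy := h y
      grind only
  obtain ⟨s, hsu, hs⟩ : ∃ s, s ≠ u ∧ IsTriangle E c d s := by
    rcases hE.exists_isTriangle_ne h3 with ⟨x, hx, h⟩ | h
    · have := link h
      grind only
    · exact h
  obtain ⟨t, htu, ht⟩ : ∃ t, t ≠ u ∧ IsTriangle E b a t := by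
    rcases hE.exists_isTriangle_ne h1.swap.rotate with ⟨x, hx, h⟩ | h
    · have := link h
      grind only
    · exact h
  have hsa : a = s := by
    obtain ⟨x, hx⟩ := hE.exists_isTriangle_opposite h3.rotate hs hsu.symm
    have := link hx
    have sc := hs.2.1
    have sd := hs.2.2.1
    have sb : s ≠ b := by
      rintro rfl
      exact hE.not_isTriangle_of_two h2.rotate.rotate h3.swap sd.symm hs.swap.rotate
    grind only
  have htd : d = t := by
    obtain ⟨x, hx⟩ := hE.exists_isTriangle_opposite h1.rotate.swap ht htu.symm
    have := link hx
    have tb := ht.2.1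
    have ta := ht.2.2.1
    have tc : t ≠ c := by
      rintro rfl
      exact hE.not_isTriangle_of_two h2.swap h1.rotate.rotate ta.symm ht.swap.rotate
    grind only
  subst hsa htd
  have e1 := h1.2.2.2
  have e2 := h2.2.2.2
  have e3 := h3.2.2.2
  have e4 := hs.2.2.2
  have e5 := ht.2.2.2
  have had' : IsTriangle E d a b := ht.rotate.swap
  let B : Finset (Finset V) := {{c, d, a}, {b, a, d}, {u, a, b}, {u, b, c}, {u, c, d}}
  have b1 : {u, a, b} ∈ B := by simp [B]
  have b2 : {u, b, c} ∈ B := by simp [B]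
  have b3 : {u, c, d} ∈ B := by simp [B]
  have b4 : {c, d, a} ∈ B := by simp [B]
  have b5 : {b, a, d} ∈ B := by simp [B]
  have hu : ∀ f ∈ E, u ∈ f → f ∈ B := by
    intro f hf huf
    rcases hall f hf huf with rfl | rfl | rfl <;> assumption
  have hBE : B ⊆ E := by
    simp only [B, Finset.insert_subset_iff, Finset.singleton_subset_iff]
    exact ⟨e4, e5, e1, e2, e3⟩
  have hB : B.card = 5 := by
    have ne {f g : Finset V} (x : V) (hf : x ∈ f) (hg : x ∉ g) : f ≠ g := by
      rintro rfl
      exact hg hf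
    have n4 : u ∉ ({c, d, a} : Finset V) := by simp [uc, ud, ua]
    have n5 : u ∉ ({b, a, d} : Finset V) := by simp [ub, ud, ua]
    have n45 : ({c, d, a} : Finset V) ≠ {b, a, d} := ne c (by simp) (by simp [hbc.symm, hac.symm, hcd])
    simp only [B]
    rw [Finset.card_insert_of_notMem, Finset.card_insert_of_notMem,
      IsTriangle.card_path hac had hbd h1 h3]
    · simp only [Finset.mem_insert, Finset.mem_singleton, not_or]
      exact ⟨(ne u (by simp) n5).symm, (ne u (by simp) n5).symm, (ne u (by simp) n5).symm⟩
    · simp only [Finset.mem_insert, Finset.mem_singleton, not_or]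
      exact ⟨n45, (ne u (by simp) n4).symm, (ne u (by simp) n4).symm, (ne u (by simp) n4).symm⟩
  have of_two {p q x y : V} (hx : {p, q, x} ∈ B) (hy : {p, q, y} ∈ B) (hpq : p ≠ q)
      (h : ∀ z, IsTriangle E p q z → z = x ∨ z = y) : ∀ f ∈ E, p ∈ f → q ∈ f → f ∈ B := by
    intro f hf hp hq
    obtain ⟨z, rfl, hz⟩ := hE.exists_isTriangle hf hp hq hpq
    rcases h z hz with rfl | rfl
    · exact hx
    · exact hy
  have of_one {p q x : V} (hx : {p, q, x} ∈ B) (hpq : p ≠ q)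
      (h : ∀ z, IsTriangle E p q z → z = x) : ∀ f ∈ E, p ∈ f → q ∈ f → f ∈ B :=
    of_two hx hx hpq fun z hz => .inl (h z hz)
  have pab := of_two (Finset.triple_rotate u a b ▸ b1) (Finset.insert_comm b a {d} ▸ b5) hab
    fun z => hE.eq_or_eq h1.rotate ht.swap ud
  have pcd := of_two (Finset.triple_rotate u c d ▸ b3) b4 hcd
    fun z => hE.eq_or_eq h3.rotate hs ua
  have pda := of_two (Finset.triple_rotate c d a ▸ b4) (Finset.triple_reverse b a d ▸ b5) had.symm
    fun z => hE.eq_or_eq hs.rotate had' hbc.symm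
  have pbc := of_one (Finset.triple_rotate u b c ▸ b2) hbc
    ((hE.forall_eq_or_forall_eq h2 h1.swap.rotate hac.symm).resolve_left fun h => hbd (h d h3).symm)
  have pca := of_one (Finset.pair_comm d a ▸ b4) hac.symm
    ((hE.forall_eq_or_forall_eq hs.swap h3.rotate.swap ua.symm).resolve_left
      fun h => hbc (h b had'))
  have pbd := of_one (Finset.pair_comm a d ▸ b5) hbd
    ((hE.forall_eq_or_forall_eq ht.swap h1.rotate ud.symm).resolve_left
      fun h => hbc (h c hs.rotate.swap).symm)
  refine ⟨{u, a, b, c, d}, B, ?_, hB, hBE, ?_, by simp, hu, ?_⟩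
  · simp [*]
  · simp only [B, Finset.forall_mem_insert, Finset.mem_singleton, forall_eq]
    simp [Finset.insert_subset_iff]
  · intro f hf x hx y hy hxy mx my
    simp only [Finset.mem_insert, Finset.mem_singleton] at hx hy
    rcases hx with rfl | rfl | rfl | rfl | rfl <;> rcases hy with rfl | rfl | rfl | rfl | rfl <;>
      first
      | exact absurd rfl hxy
      | exact hu f hf ‹_›
      | exact pab f hf ‹_› ‹_›
      | exact pcd f hf ‹_› ‹_›
      | exact pda f hf ‹_› ‹_›
      | exact pbc f hf ‹_› ‹_›
      | exact pca f hf ‹_› ‹_›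
      | exact pbd f hf ‹_› ‹_›

theorem card_filter_mem_le_two {p q : V} (hpq : p ≠ q) :
    (E.filter fun e => p ∈ e ∧ q ∈ e).card ≤ 2 := by
  by_contra! h
  obtain ⟨f, g, k, hf, hg, hk, hfg, hfk, hgk⟩ := Finset.two_lt_card_iff.1 h
  simp only [Finset.mem_filter] at hf hg hk
  obtain ⟨a, rfl, ha⟩ := hE.exists_isTriangle hf.1 hf.2.1 hf.2.2 hpq
  obtain ⟨b, rfl, hb⟩ := hE.exists_isTriangle hg.1 hg.2.1 hg.2.2 hpq
  obtain ⟨c, rfl, hc⟩ := hE.exists_isTriangle hk.1 hk.2.1 hk.2.2 hpq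
  have hab : a ≠ b := by rintro rfl; exact hfg rfl
  rcases hE.eq_or_eq ha hb hab hc with rfl | rfl
  · exact hfk rfl
  · exact hgk rfl

omit hE in
theorem _root_.GoodPair.two_le_card_filter {u w : V} (h : GoodPair E u w) {S : Finset V}
    (hS : ∀ f ∈ E, u ∈ f → f ⊆ S) : 2 ≤ (E.filter fun e => w ∈ e ∧ ∃ x ∈ S, x ∈ e).card := by
  obtain ⟨x, y, -, -, -, -, -, -, f, g, f', g', _, hf, hg, hf', hg', -, hnd, h1, h2, h3, h4, h5, h6,
    h7, h8, -⟩ := h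
  have hne : f' ≠ g' := by rintro rfl; simp at hnd
  rw [← Finset.card_pair hne]
  refine Finset.card_le_card ?_
  simp only [Finset.insert_subset_iff, Finset.singleton_subset_iff, Finset.mem_filter]
  exact ⟨⟨hf', h5, x, hS f hf h1 h2, h6⟩, hg', h7, y, hS g hg h3 h4, h8⟩

theorem false_of_boundary {S : Finset V} {a b c : V} (h : IsTriangle E a b c)
    (hS : ∀ x ∈ ({a, b, c} : Finset V), x ∉ S)
    (hP : 2 ≤ (E.filter fun e => a ∈ e ∧ ∃ x ∈ S, x ∈ e).card)
    (hE' : ∀ e ∈ E, a ∈ e → b ∈ e ∨ c ∈ e) (hb : ∀ x, IsTriangle E a b x → x = c) : False := by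
  have hsub : insert {a, b, c} (E.filter fun e => a ∈ e ∧ ∃ x ∈ S, x ∈ e) ⊆
      E.filter fun e => a ∈ e ∧ c ∈ e := by
    simp only [Finset.insert_subset_iff, Finset.mem_filter]
    refine ⟨⟨h.2.2.2, by simp⟩, fun e he => ?_⟩
    simp only [Finset.mem_filter] at he ⊢
    obtain ⟨he, ha, x, hx, hxe⟩ := he
    refine ⟨he, ha, (hE' e he ha).resolve_left fun hbe => ?_⟩
    obtain ⟨y, rfl, hy⟩ := hE.exists_isTriangle he ha hbe h.1
    obtain rfl := hb y hy
    exact hS x hxe hx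
  have h1 := Finset.card_le_card hsub
  have h2 := hE.card_filter_mem_le_two h.2.1
  rw [Finset.card_insert_of_notMem] at h1
  · omega
  · simp only [Finset.mem_filter, not_and, not_exists]
    exact fun _ _ x hx hx' => hS x hx' hx

theorem card_lt [Fintype V] {v : V} (hv : ∀ e ∈ E, v ∉ e)
    (hgood : ∀ u w, u ≠ v → w ≠ v → u ≠ w → GoodPair E u w) (hn : 7 ≤ Fintype.card V) :
    Fintype.card V < E.card := by
  by_contra! hcard
  have hex : ∀ u, u ≠ v → ∃ e ∈ E, u ∈ e := by
    intro u hu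
    obtain ⟨w, hw, hwu⟩ := Finset.exists_mem_ne (s := Finset.univ.erase v)
      (by rw [Finset.card_erase_of_mem (Finset.mem_univ v), Finset.card_univ]; omega) u
    obtain ⟨x, y, -, -, -, -, -, -, f, _, _, _, _, hf, -, -, -, -, -, huf, -⟩ :=
      hgood u w hu (Finset.ne_of_mem_erase hw) hwu.symm
    exact ⟨f, hf, huf⟩
  have hthree : ∀ u, u ≠ v → 3 ≤ hdeg E u := fun u hu =>
    let ⟨_, he, hue⟩ := hex u hu
    hE.three_le_hdeg he hue
  obtain ⟨u, huv, hu⟩ : ∃ u, u ≠ v ∧ hdeg E u ≤ 3 := by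
    by_contra! h
    have h1 := Finset.le_sum_card_inter (s := Finset.univ.erase v) (B := E) (n := 4)
      fun a ha => h a (Finset.ne_of_mem_erase ha)
    have h2 : ∑ t ∈ E, (Finset.univ.erase v ∩ t).card ≤ E.card * 3 :=
      Finset.sum_le_card_nsmul _ _ _ fun t ht =>
        (Finset.card_le_card Finset.inter_subset_right).trans (hE.uniform t ht).le
    rw [Finset.card_erase_of_mem (Finset.mem_univ v), Finset.card_univ] at h1
    omega
  obtain ⟨e, he, hue⟩ := hex u huv
  obtain ⟨S, B, hS, hB, hBE, hBS, huS, huB, hSB⟩ := hE.exists_band he hue hu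
  set W := Finset.univ \ insert v S with hW
  have memW {w : V} : w ∈ W ↔ w ≠ v ∧ w ∉ S := by simp [W]
  have hWcard : Fintype.card V ≤ W.card + 6 := by
    have h1 : _ ≤ W.card := Finset.le_card_sdiff (insert v S) Finset.univ
    have h2 := Finset.card_insert_le v S
    rw [Finset.card_univ] at h1
    omega
  set R := E \ B
  have hR : R.card + 5 = E.card := by rw [← hB, Finset.card_sdiff_add_card_eq_card hBE]
  have hP : ∀ w ∈ W, 2 ≤ (E.filter fun e => w ∈ e ∧ ∃ x ∈ S, x ∈ e).card := fun w hw =>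
    (hgood u w huv (memW.1 hw).1 (by rintro rfl; exact (memW.1 hw).2 huS)).two_le_card_filter
      fun f hf huf => hBS f (huB f hf huf)
  have memR {w : V} {f : Finset V} (hw : w ∈ W) (hf : f ∈ E) (hwf : w ∈ f) : f ∈ R :=
    Finset.mem_sdiff.2 ⟨hf, fun hfB => (memW.1 hw).2 (hBS f hfB hwf)⟩
  have hRS : ∀ f ∈ R, (f ∩ S).card ≤ 1 := by
    intro f hf
    rw [Finset.mem_sdiff] at hf
    refine Finset.card_le_one.2 fun x hx y hy => ?_
    rw [Finset.mem_inter] at hx hy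
    by_contra hxy
    exact hf.2 (hSB f hf.1 x hx.2 y hy.2 hxy hx.1 hy.1)
  have hRW : ∀ f ∈ R, (f ∩ S).card + (W ∩ f).card = 3 := by
    intro f hf
    rw [Finset.mem_sdiff] at hf
    rw [← hE.uniform f hf.1, ← Finset.card_inter_add_card_sdiff f S]
    congr 2
    ext x
    simp only [Finset.mem_inter, memW, Finset.mem_sdiff]
    have := hv f hf.1
    grind
  have hE2 : ∀ a ∈ W, ∀ f ∈ E, a ∈ f → ∃ b ∈ W, b ≠ a ∧ b ∈ f := by
    intro a ha f hf haf
    have h1 := hRS f (memR ha hf haf)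
    have h2 := hRW f (memR ha hf haf)
    obtain ⟨b, hb, hba⟩ := Finset.exists_mem_ne (s := W ∩ f) (by omega) a
    rw [Finset.mem_inter] at hb
    exact ⟨b, hb.1, hba, hb.2⟩
  set P := R.filter fun f => ∃ x ∈ S, x ∈ f
  set Q := R.filter fun f => ¬ ∃ x ∈ S, x ∈ f
  have hPQ : P.card + Q.card = R.card := Finset.card_filter_add_card_filter_not _
  have hPW : ∀ f ∈ P, (W ∩ f).card ≤ 2 := by
    intro f hf
    obtain ⟨hf, x, hxS, hxf⟩ := Finset.mem_filter.1 hf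
    have h1 := hRW f hf
    have h2 : 0 < (f ∩ S).card := Finset.card_pos.2 ⟨x, Finset.mem_inter.2 ⟨hxf, hxS⟩⟩
    omega
  have hQW : ∀ f ∈ Q, (W ∩ f).card = 3 := by
    intro f hf
    obtain ⟨hf, hfS⟩ := Finset.mem_filter.1 hf
    have h1 := hRW f hf
    have h2 : f ∩ S = ∅ := Finset.eq_empty_of_forall_notMem fun x hx =>
      hfS ⟨x, (Finset.mem_inter.1 hx).2, (Finset.mem_inter.1 hx).1⟩
    rwa [h2, Finset.card_empty, zero_add] at h1
  have hPsum : W.card * 2 ≤ P.card * 2 := by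
    refine (Finset.le_sum_card_inter (B := P) fun w hw => (hP w hw).trans ?_).trans
      (Finset.sum_le_card_nsmul _ _ _ hPW)
    refine Finset.card_le_card fun f hf => ?_
    simp only [Finset.mem_filter, P] at hf ⊢
    exact ⟨⟨memR hw hf.1 hf.2.1, hf.2.2⟩, hf.2.1⟩
  have hRsum : W.card * 3 ≤ P.card * 2 + Q.card * 3 := by
    refine (Finset.le_sum_card_inter (B := R) fun w hw => (hthree w (memW.1 hw).1).trans ?_).trans ?_
    · refine Finset.card_le_card fun f hf => ?_
      simp only [Finset.mem_filter] at hf ⊢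
      exact ⟨memR hw hf.1 hf.2, hf.2⟩
    · rw [← Finset.sum_filter_add_sum_filter_not R fun f => ∃ x ∈ S, x ∈ f]
      exact add_le_add (Finset.sum_le_card_nsmul _ _ _ hPW)
        (Finset.sum_le_card_nsmul _ _ _ fun f hf => (hQW f hf).le)
  obtain hW1 | hW2 | hW3 : W.card = 1 ∨ W.card = 2 ∨ (W.card = 3 ∧ Q.card = 1) := by omega
  · obtain ⟨a, haW⟩ := Finset.card_eq_one.1 hW1
    have ha : a ∈ W := by simp [haW]
    obtain ⟨f, hf, haf⟩ := hex a (memW.1 ha).1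
    obtain ⟨b, hb, hba, -⟩ := hE2 a ha f hf haf
    rw [haW, Finset.mem_singleton] at hb
    exact hba hb
  · obtain ⟨a, b, hab, habW⟩ := Finset.card_eq_two.1 hW2
    have ha : a ∈ W := by simp [habW]
    have h1 := hthree a (memW.1 ha).1
    have h2 := hE.card_filter_mem_le_two hab
    refine absurd (Finset.card_le_card (s := E.filter fun e => a ∈ e)
      (t := E.filter fun e => a ∈ e ∧ b ∈ e) fun f hf => ?_) ?_
    · rw [Finset.mem_filter] at hf ⊢
      obtain ⟨c, hc, hca, hcf⟩ := hE2 a ha f hf.1 hf.2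
      rw [habW, Finset.mem_insert, Finset.mem_singleton] at hc
      obtain rfl := hc.resolve_left hca
      exact ⟨hf.1, hf.2, hcf⟩
    · exact (h2.trans_lt h1).not_ge
  · obtain ⟨hW3, hQ⟩ := hW3
    obtain ⟨f, hf⟩ := Finset.card_pos.1 (hQ ▸ Nat.one_pos)
    have hfE : f ∈ E := (Finset.mem_sdiff.1 (Finset.mem_filter.1 hf).1).1
    obtain rfl : f = W :=
      (Finset.eq_of_subset_of_card_le Finset.inter_subset_right
        ((hE.uniform f hfE).trans (hQW f hf).symm).le).symm.trans
      (Finset.eq_of_subset_of_card_le Finset.inter_subset_left (hW3.trans (hQW f hf).symm).le)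
    obtain ⟨a, b, c, hab, hac, hbc, hWabc⟩ := Finset.card_eq_three.1 hW3
    have key {a b c : V} (hWabc : W = {a, b, c}) (h : IsTriangle E a b c) :
        ¬ ∀ x, IsTriangle E a b x → x = c := by
      have ha : a ∈ W := by simp [hWabc]
      refine hE.false_of_boundary h (fun x hx => (memW.1 (hWabc ▸ hx)).2) (hP a ha)
        fun f hf haf => ?_
      obtain ⟨d, hd, hda, hdf⟩ := hE2 a ha f hf haf
      rw [hWabc, Finset.mem_insert, Finset.mem_insert, Finset.mem_singleton] at hd
      refine (hd.resolve_left hda).imp ?_ ?_ <;> rintro rfl <;> exact hdf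
    have h : IsTriangle E a b c := ⟨hab, hac, hbc, hWabc ▸ hfE⟩
    rcases hE.exists_boundary h with h' | h' | h'
    · exact key hWabc h h'
    · exact key (hWabc.trans (by rw [Finset.pair_comm])) h.swap.rotate h'
    · exact key (hWabc.trans (Finset.triple_rotate ..)) h.rotate h'

end IsLocallyGood

omit [DecidableEq V] in
theorem IsBergeK4.mono {E' : Finset (Finset V)} (hE : E ⊆ E') (h : IsBergeK4 E) :
    IsBergeK4 E' := by
  obtain ⟨a, b, c, d, n1, n2, n3, n4, n5, n6, f1, f2, f3, f4, f5, f6, h1, h2, h3, h4, h5, h6, h⟩ := h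
  exact ⟨a, b, c, d, n1, n2, n3, n4, n5, n6, f1, f2, f3, f4, f5, f6, hE h1, hE h2, hE h3, hE h4,
    hE h5, hE h6, h⟩

section Map

variable {W : Type*} [DecidableEq W] (φ : V ↪ W)

omit [DecidableEq V] in
theorem IsBergeK4.map (h : IsBergeK4 E) : IsBergeK4 (E.image (Finset.map φ)) := by
  obtain ⟨a, b, c, d, n1, n2, n3, n4, n5, n6, f1, f2, f3, f4, f5, f6, h1, h2, h3, h4, h5, h6, hnd,
    h⟩ := h
  have mem {f : Finset V} (hf : f ∈ E) : f.map φ ∈ E.image (Finset.map φ) :=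
    Finset.mem_image_of_mem _ hf
  exact ⟨φ a, φ b, φ c, φ d, by simpa, by simpa, by simpa, by simpa, by simpa, by simpa, _, _, _, _,
    _, _, mem h1, mem h2, mem h3, mem h4, mem h5, mem h6, hnd.map (Finset.map_injective φ),
    by simpa using h⟩

omit [DecidableEq V] in
theorem GoodPair.map {u v : V} (h : GoodPair E u v) :
    GoodPair (E.image (Finset.map φ)) (φ u) (φ v) := by
  obtain ⟨x, y, n1, n2, n3, n4, n5, n6, f1, f2, f3, f4, f5, h1, h2, h3, h4, h5, hnd, h⟩ := h
  have mem {f : Finset V} (hf : f ∈ E) : f.map φ ∈ E.image (Finset.map φ) :=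
    Finset.mem_image_of_mem _ hf
  exact ⟨φ x, φ y, by simpa, by simpa, by simpa, by simpa, by simpa, by simpa, _, _, _, _,
    _, mem h1, mem h2, mem h3, mem h4, mem h5, hnd.map (Finset.map_injective φ),
    by simpa using h⟩

end Map

/-- A saturated hypergraph in which `x`, `y` are a good pair and every other vertex forms with
`x` and `y` a Berge triangle. -/
structure IsHubSaturated [Fintype V] (E : Finset (Finset V)) (x y : V) : Prop where
  saturated : IsSaturated E
  good : GoodPair E x y
  triangle : ∀ s, s ≠ x → s ≠ y → ∃ f ∈ E, ∃ g ∈ E, ∃ h ∈ E, [f, g, h].Nodup ∧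
    s ∈ f ∧ x ∈ f ∧ s ∈ g ∧ y ∈ g ∧ x ∈ h ∧ y ∈ h

theorem IsHubSaturated.extend [Fintype V] {x y : V} (hE : IsHubSaturated E x y) {W : Type*}
    [DecidableEq W] [Fintype W] (φ : V ↪ W) {p q : W} (hpq : p ≠ q) (hp : ∀ a, φ a ≠ p)
    (hq : ∀ a, φ a ≠ q) (hW : ∀ w, w = p ∨ w = q ∨ ∃ a, φ a = w) :
    IsHubSaturated (insert {φ x, p, q} (insert {φ y, p, q} (E.image (Finset.map φ)))) (φ x) (φ y) := by
  obtain ⟨⟨h3, hfree, hsat⟩, hgood, htri⟩ := hE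
  set E' := insert {φ x, p, q} (insert {φ y, p, q} (E.image (Finset.map φ))) with hE'
  have hxy : x ≠ y := by
    obtain ⟨_, _, h, -⟩ := hgood
    exact h
  have hA : {φ x, p, q} ∈ E' := by simp [hE']
  have hB : {φ y, p, q} ∈ E' := by simp [hE']
  have hsub : E.image (Finset.map φ) ⊆ E' := by
    intro f hf
    simp only [hE', Finset.mem_insert, hf, or_true]
  have mem {f : Finset V} (hf : f ∈ E) : f.map φ ∈ E' := hsub (Finset.mem_image_of_mem _ hf)
  have hAB : ({φ x, p, q} : Finset W) ≠ {φ y, p, q} := by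
    intro h
    have : φ x ∈ ({φ y, p, q} : Finset W) := h ▸ Finset.mem_insert_self ..
    simp [hp, hq, hxy] at this
  have hmap {r : W} (hr : r = p ∨ r = q) (f : Finset V) : r ∉ f.map φ := by
    rcases hr with rfl | rfl <;> simp [hp, hq]
  have hnew {f : Finset W} (hf : f ∈ E') {r : W} (hr : r = p ∨ r = q) (hrf : r ∈ f) :
      f = {φ x, p, q} ∨ f = {φ y, p, q} := by
    simp only [hE', Finset.mem_insert, Finset.mem_image] at hf
    rcases hf with rfl | rfl | ⟨g, -, rfl⟩
    · exact .inl rfl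
    · exact .inr rfl
    · exact absurd hrf (hmap hr g)
  have hold {f : Finset W} (hf : f ∈ E') {a b : V} (hab : a ≠ b) (ha : φ a ∈ f) (hb : φ b ∈ f) :
      ∃ g ∈ E, g.map φ = f := by
    simp only [hE', Finset.mem_insert, Finset.mem_image] at hf
    rcases hf with rfl | rfl | hf
    · simp only [Finset.mem_insert, Finset.mem_singleton, hp, hq, or_false, φ.injective.eq_iff] at ha hb
      exact absurd (ha.trans hb.symm) hab
    · simp only [Finset.mem_insert, Finset.mem_singleton, hp, hq, or_false, φ.injective.eq_iff] at ha hb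
      exact absurd (ha.trans hb.symm) hab
    · exact hf
  have hnewtri {r : W} (hr : r = p ∨ r = q) {s : V} (hsx : s ≠ x) (hsy : s ≠ y) :
      GoodPair E' r (φ s) := by
    obtain ⟨f, hf, g, hg, h, hh, hnd, m1, m2, m3, m4, m5, m6⟩ := htri s hsx hsy
    have hrφ (a : V) : r ≠ φ a := by rcases hr with rfl | rfl <;> simp [(hp a).symm, (hq a).symm]
    have hrA (a : W) : r ∈ ({a, p, q} : Finset W) := by simp [hr]
    refine ⟨φ x, φ y, hrφ s, hrφ x, hrφ y, by simpa, by simpa, by simpa, {φ x, p, q}, {φ y, p, q},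
      f.map φ, g.map φ, h.map φ, hA, hB, mem hf, mem hg, mem hh, ?_, hrA _, by simp, hrA _, by simp,
      by simpa, by simpa, by simpa, by simpa, by simpa, by simpa⟩
    have hne (a : W) (f : Finset V) : ({a, p, q} : Finset W) ≠ f.map φ := fun h =>
      hmap hr f (h ▸ hrA a)
    have := hnd.map (Finset.map_injective φ)
    simp only [List.map_cons, List.map_nil] at this
    rw [List.nodup_cons, List.nodup_cons]
    refine ⟨?_, ?_, this⟩ <;> simp [hAB, hne]
  refine ⟨⟨?_, ?_, ?_⟩, (hgood.map φ).mono hsub, ?_⟩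
  · intro f hf
    simp only [hE', Finset.mem_insert, Finset.mem_image] at hf
    rcases hf with rfl | rfl | ⟨g, hg, rfl⟩
    · exact Finset.card_eq_three.2 ⟨_, _, _, hp x, hq x, hpq, rfl⟩
    · exact Finset.card_eq_three.2 ⟨_, _, _, hp y, hq y, hpq, rfl⟩
    · rw [Finset.card_map, h3 g hg]
  · rintro ⟨a, b, c, d, h⟩
    have old {v : W} (hv : v = a ∨ v = b ∨ v = c ∨ v = d) : ∃ v', φ v' = v := by
      obtain ⟨f, hf, g, hg, k, hk, n1, n2, n3, m1, m2, m3⟩ := h.exists_three_edges hv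
      by_contra hv'
      have hv : v = p ∨ v = q := by
        have := hW v
        tauto
      have kf := hnew hf hv m1
      have kg := hnew hg hv m2
      have kk := hnew hk hv m3
      grind only
    obtain ⟨a, rfl⟩ := old (.inl rfl)
    obtain ⟨b, rfl⟩ := old (.inr (.inl rfl))
    obtain ⟨c, rfl⟩ := old (.inr (.inr (.inl rfl)))
    obtain ⟨d, rfl⟩ := old (.inr (.inr (.inr rfl)))
    obtain ⟨n1, n2, n3, n4, n5, n6, f1, f2, f3, f4, f5, f6, h1, h2, h3, h4, h5, h6, hnd,
      m1, m2, m3, m4, m5, m6, m7, m8, m9, m10, m11, m12⟩ := h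
    rw [φ.injective.ne_iff] at n1 n2 n3 n4 n5 n6
    obtain ⟨f1, k1, rfl⟩ := hold h1 n1 m1 m2
    obtain ⟨f2, k2, rfl⟩ := hold h2 n2 m3 m4
    obtain ⟨f3, k3, rfl⟩ := hold h3 n3 m5 m6
    obtain ⟨f4, k4, rfl⟩ := hold h4 n4 m7 m8
    obtain ⟨f5, k5, rfl⟩ := hold h5 n5 m9 m10
    obtain ⟨f6, k6, rfl⟩ := hold h6 n6 m11 m12
    simp only [Finset.mem_map' φ] at m1 m2 m3 m4 m5 m6 m7 m8 m9 m10 m11 m12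
    exact hfree ⟨a, b, c, d, n1, n2, n3, n4, n5, n6, f1, f2, f3, f4, f5, f6, k1, k2, k3, k4, k5, k6,
      List.Nodup.of_map (Finset.map φ) hnd, m1, m2, m3, m4, m5, m6, m7, m8, m9, m10, m11, m12⟩
  · intro e he heE
    by_cases hpqe : ∃ r ∈ e, r = p ∨ r = q
    · obtain ⟨r, hre, hr⟩ := hpqe
      by_cases hs : ∃ s, φ s ∈ e ∧ s ≠ x ∧ s ≠ y
      · obtain ⟨s, hse, hsx, hsy⟩ := hs
        exact (hnewtri hr hsx hsy).isBergeK4_insert heE hre hse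
      by_cases hxye : φ x ∈ e ∧ φ y ∈ e
      · exact ((hgood.map φ).mono hsub).isBergeK4_insert heE hxye.1 hxye.2
      have hcard (a : V) : ({φ a, p, q} : Finset W).card ≤ e.card :=
        Finset.card_le_three.trans he.ge
      have hsub' : e ⊆ {φ x, p, q} ∨ e ⊆ {φ y, p, q} := by
        have hmem (w : W) (hw : w ∈ e) : w = p ∨ w = q ∨ w = φ x ∨ w = φ y := by
          refine (hW w).imp_right (Or.imp_right ?_)
          rintro ⟨a, rfl⟩
          by_contra! h
          exact hs ⟨a, hw, ne_of_apply_ne φ h.1, ne_of_apply_ne φ h.2⟩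
        by_cases hye : φ y ∈ e
        · right
          intro w hw
          have hwx : w ≠ φ x := by rintro rfl; exact hxye ⟨hw, hye⟩
          simp only [Finset.mem_insert, Finset.mem_singleton]
          have := hmem w hw
          tauto
        · left
          intro w hw
          have hwy : w ≠ φ y := by rintro rfl; exact hye hw
          simp only [Finset.mem_insert, Finset.mem_singleton]
          have := hmem w hw
          tauto
      rcases hsub' with h | h
      · exact absurd (Finset.eq_of_subset_of_card_le h (hcard x) ▸ hA) heE
      · exact absurd (Finset.eq_of_subset_of_card_le h (hcard y) ▸ hB) heE
    · obtain ⟨g, rfl⟩ : ∃ g : Finset V, g.map φ = e := by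
        refine ⟨Finset.univ.filter fun a => φ a ∈ e, ?_⟩
        ext w
        simp only [Finset.mem_map, Finset.mem_filter, Finset.mem_univ, true_and]
        refine ⟨?_, fun hw => ?_⟩
        · rintro ⟨a, ha, rfl⟩
          exact ha
        · have hwpq : ¬ (w = p ∨ w = q) := fun h => hpqe ⟨w, hw, h⟩
          obtain ⟨a, rfl⟩ : ∃ a, φ a = w := by
            have := hW w
            tauto
          exact ⟨a, hw, rfl⟩
      refine (IsBergeK4.map φ (hsat g (by simpa using he) fun hg => heE (mem hg))).mono ?_
      rw [Finset.image_insert]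
      exact Finset.insert_subset_insert _ hsub
  · intro s hsx hsy
    by_cases hs : s = p ∨ s = q
    · obtain ⟨t, -, -, hxt, -, hyt, -⟩ := hgood
      obtain ⟨-, -, -, -, h, hh, -, -, -, -, -, m5, m6⟩ := htri t hxt.symm hyt.symm
      have hne (a : V) : ({φ a, p, q} : Finset W) ≠ h.map φ := fun k =>
        hmap hs h (k ▸ by simp [hs])
      exact ⟨_, hA, _, hB, _, mem hh, by simp [hAB, hne], by simp [hs], by simp, by simp [hs],
        by simp, by simpa, by simpa⟩
    · obtain ⟨s, rfl⟩ : ∃ a, φ a = s := by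
        have := hW s
        tauto
      obtain ⟨f, hf, g, hg, h, hh, hnd, m⟩ := htri s (ne_of_apply_ne φ hsx) (ne_of_apply_ne φ hsy)
      exact ⟨_, mem hf, _, mem hg, _, mem hh, hnd.map (Finset.map_injective φ), by simpa using m⟩

theorem IsBergeK4.six_le_card (h : IsBergeK4 E) : 6 ≤ E.card := by
  obtain ⟨a, b, c, d, -, -, -, -, -, -, f1, f2, f3, f4, f5, f6, h1, h2, h3, h4, h5, h6, hnd, -⟩ := h
  have := Finset.card_le_card (s := [f1, f2, f3, f4, f5, f6].toFinset) (t := E) fun f hf => by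
    simp only [List.toFinset_cons, List.toFinset_nil, Finset.mem_insert, Finset.notMem_empty,
      or_false] at hf
    rcases hf with rfl | rfl | rfl | rfl | rfl | rfl <;> assumption
  rwa [List.toFinset_card_of_nodup hnd] at this

theorem IsBergeK4Core.three_le_hdeg {a b c d v : V} (h : IsBergeK4Core E a b c d)
    (hv : v = a ∨ v = b ∨ v = c ∨ v = d) : 3 ≤ hdeg E v := by
  obtain ⟨f, hf, g, hg, k, hk, n1, n2, n3, m1, m2, m3⟩ := h.exists_three_edges hv
  exact Finset.two_lt_card_iff.2 ⟨f, g, k, by simp [*]⟩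

theorem isSaturated_of_goodPairs [Fintype V] (h3 : Is3Uniform E) (hfree : ¬ IsBergeK4 E)
    (L : Finset (V × V)) (hL : ∀ p ∈ L, GoodPair E p.1 p.2)
    (h : ∀ a b c, a ≠ b → a ≠ c → b ≠ c → {a, b, c} ∉ E →
      ∃ p ∈ L, p.1 ∈ ({a, b, c} : Finset V) ∧ p.2 ∈ ({a, b, c} : Finset V)) : IsSaturated E := by
  refine ⟨h3, hfree, fun e he heE => ?_⟩
  obtain ⟨a, b, c, hab, hac, hbc, rfl⟩ := Finset.card_eq_three.1 he
  obtain ⟨p, hp, h1, h2⟩ := h a b c hab hac hbc heE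
  exact (hL p hp).isBergeK4_insert heE h1 h2

theorem isHubSaturated_five : IsHubSaturated (V := Fin 5)
    {{0, 1, 2}, {0, 1, 3}, {0, 1, 4}, {0, 2, 3}, {2, 3, 4}} 0 2 := by
  have h02 : GoodPair (V := Fin 5) {{0, 1, 2}, {0, 1, 3}, {0, 1, 4}, {0, 2, 3}, {2, 3, 4}} 0 2 :=
    ⟨1, 3, by decide, by decide, by decide, by decide, by decide, by decide, {0, 1, 4}, {0, 2, 3},
      {0, 1, 2}, {2, 3, 4}, {0, 1, 3}, by decide⟩
  have h12 : GoodPair (V := Fin 5) {{0, 1, 2}, {0, 1, 3}, {0, 1, 4}, {0, 2, 3}, {2, 3, 4}} 1 2 :=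
    ⟨0, 3, by decide, by decide, by decide, by decide, by decide, by decide, {0, 1, 4}, {0, 1, 3},
      {0, 1, 2}, {2, 3, 4}, {0, 2, 3}, by decide⟩
  have h34 : GoodPair (V := Fin 5) {{0, 1, 2}, {0, 1, 3}, {0, 1, 4}, {0, 2, 3}, {2, 3, 4}} 3 4 :=
    ⟨0, 2, by decide, by decide, by decide, by decide, by decide, by decide, {0, 1, 3}, {0, 2, 3},
      {0, 1, 4}, {2, 3, 4}, {0, 1, 2}, by decide⟩
  refine ⟨isSaturated_of_goodPairs (by unfold Is3Uniform; decide) (fun h => ?_)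
    {(0, 2), (1, 2), (3, 4)} ?_ (by decide), h02, by decide⟩
  · exact absurd h.six_le_card (by decide)
  · simp [h02, h12, h34]

theorem isHubSaturated_six : IsHubSaturated (V := Fin 6)
    {{0, 1, 2}, {0, 1, 3}, {0, 1, 4}, {0, 2, 3}, {0, 2, 5}, {3, 4, 5}} 0 3 := by
  set E : Finset (Finset (Fin 6)) :=
    {{0, 1, 2}, {0, 1, 3}, {0, 1, 4}, {0, 2, 3}, {0, 2, 5}, {3, 4, 5}} with hE
  have h03 : GoodPair E 0 3 :=
    ⟨1, 2, by decide, by decide, by decide, by decide, by decide, by decide, {0, 1, 4}, {0, 2, 5},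
      {0, 1, 3}, {0, 2, 3}, {0, 1, 2}, by decide⟩
  have h04 : GoodPair E 0 4 :=
    ⟨1, 3, by decide, by decide, by decide, by decide, by decide, by decide, {0, 1, 2}, {0, 2, 3},
      {0, 1, 4}, {3, 4, 5}, {0, 1, 3}, by decide⟩
  have h13 : GoodPair E 1 3 :=
    ⟨0, 2, by decide, by decide, by decide, by decide, by decide, by decide, {0, 1, 4}, {0, 1, 2},
      {0, 1, 3}, {0, 2, 3}, {0, 2, 5}, by decide⟩
  have h15 : GoodPair E 1 5 :=
    ⟨0, 3, by decide, by decide, by decide, by decide, by decide, by decide, {0, 1, 2}, {0, 1, 3},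
      {0, 2, 5}, {3, 4, 5}, {0, 2, 3}, by decide⟩
  have h23 : GoodPair E 2 3 :=
    ⟨0, 1, by decide, by decide, by decide, by decide, by decide, by decide, {0, 2, 5}, {0, 1, 2},
      {0, 2, 3}, {0, 1, 3}, {0, 1, 4}, by decide⟩
  have h24 : GoodPair E 2 4 :=
    ⟨0, 3, by decide, by decide, by decide, by decide, by decide, by decide, {0, 1, 2}, {0, 2, 3},
      {0, 1, 4}, {3, 4, 5}, {0, 1, 3}, by decide⟩
  refine ⟨isSaturated_of_goodPairs (by unfold Is3Uniform; decide) ?_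
    {(0, 3), (0, 4), (1, 3), (1, 5), (2, 3), (2, 4)} ?_ (by decide), h03, by decide⟩
  · rintro ⟨a, b, c, d, h⟩
    have hdeg : ∀ v, 3 ≤ hdeg E v → v < 4 := by unfold hdeg; decide
    have ha := hdeg a (h.three_le_hdeg (.inl rfl))
    have hb := hdeg b (h.three_le_hdeg (.inr (.inl rfl)))
    have hc := hdeg c (h.three_le_hdeg (.inr (.inr (.inl rfl))))
    have hd := hdeg d (h.three_le_hdeg (.inr (.inr (.inr rfl))))
    obtain ⟨n1, n2, n3, n4, n5, n6, f1, f2, f3, f4, f5, f6, h1, h2, h3, h4, h5, h6, hnd,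
      m1, m2, m3, m4, m5, m6, m7, m8, m9, m10, m11, m12⟩ := h
    have mem {x y : Fin 6} (hx : x < 4) (hy : y < 4) (hxy : x ≠ y) {f : Finset (Fin 6)} (hf : f ∈ E)
        (hxf : x ∈ f) (hyf : y ∈ f) : f ∈ E.erase {3, 4, 5} := by
      refine Finset.mem_erase.2 ⟨?_, hf⟩
      rintro rfl
      clear * - hx hy hxy hxf hyf
      revert x y
      decide
    have : IsBergeK4 (E.erase {3, 4, 5}) :=
      ⟨a, b, c, d, n1, n2, n3, n4, n5, n6, f1, f2, f3, f4, f5, f6, mem ha hb n1 h1 m1 m2,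
        mem ha hc n2 h2 m3 m4, mem ha hd n3 h3 m5 m6, mem hb hc n4 h4 m7 m8, mem hb hd n5 h5 m9 m10,
        mem hc hd n6 h6 m11 m12, hnd, m1, m2, m3, m4, m5, m6, m7, m8, m9, m10, m11, m12⟩
    exact absurd this.six_le_card (by decide)
  · simp [h03, h04, h13, h15, h23, h24]

theorem exists_isHubSaturated (n : ℕ) : ∃ (E : Finset (Finset (Fin (n + 5)))) (x y : Fin (n + 5)),
    IsHubSaturated E x y ∧ E.card ≤ n + 5 := by
  induction n using Nat.twoStepInduction with
  | zero => exact ⟨_, _, _, isHubSaturated_five, by decide⟩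
  | one => exact ⟨_, _, _, isHubSaturated_six, by decide⟩
  | more n ih _ =>
    obtain ⟨E, x, y, hE, hcard⟩ := ih
    refine ⟨_, _, _, hE.extend (Fin.castAddEmb 2) (p := Fin.natAdd (n + 5) 0)
      (q := Fin.natAdd (n + 5) 1) ?_ ?_ ?_ ?_, ?_⟩
    · simp
    · intro a h
      have := congrArg Fin.val h
      have := a.isLt
      simp at *
      omega
    · intro a h
      have := congrArg Fin.val h
      have := a.isLt
      simp at *
      omega
    · intro w
      induction w using Fin.addCases (m := n + 5) with
      | left i => exact .inr (.inr ⟨i, rfl⟩)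
      | right i => fin_cases i <;> simp
    · refine (Finset.card_insert_le _ _).trans ?_
      have h1 := Finset.card_insert_le
        {Fin.castAddEmb 2 y, Fin.natAdd (n + 5) 0, Fin.natAdd (n + 5) 1}
        (E.image (Finset.map (Fin.castAddEmb 2)))
      have h2 := Finset.card_image_le (s := E) (f := Finset.map (Fin.castAddEmb (n := n + 5) 2))
      omega

theorem card_lt_of_hdeg_eq_zero [Fintype V] (hE : IsSaturated E) {v : V} (hv : hdeg E v = 0)
    (hn : 7 ≤ Fintype.card V) : Fintype.card V < E.card := by
  obtain ⟨h3, hfree, hsat⟩ := hE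
  have hv : ∀ e ∈ E, v ∉ e := fun _ he =>
    Finset.filter_eq_empty_iff.1 (Finset.card_eq_zero.1 hv) he
  have ne_left {p q : V} (h : GoodPair E p q) : p ≠ v := by
    rintro rfl
    obtain ⟨x, y, -, -, -, -, -, -, f, _, _, _, _, hf, -, -, -, -, -, hpf, -⟩ := h
    exact hv f hf hpf
  have hgood : ∀ u w, u ≠ v → w ≠ v → u ≠ w → GoodPair E u w := by
    intro u w hu hw huw
    obtain ⟨p, hp, q, hq, hpq⟩ := exists_goodPair_of_isBergeK4_insert hfree
      (hsat {v, u, w} (Finset.card_eq_three.2 ⟨v, u, w, hu.symm, hw.symm, huw, rfl⟩)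
        fun h => hv _ h (by simp))
    have hp' := ne_left hpq
    have hq' := ne_left hpq.symm
    have hne : p ≠ q := by
      obtain ⟨_, _, h, -⟩ := hpq
      exact h
    simp only [Finset.mem_insert, Finset.mem_singleton, hp', hq', false_or] at hp hq
    rcases hp with rfl | rfl <;> rcases hq with rfl | rfl
    · exact absurd rfl hne
    · exact hpq
    · exact hpq.symm
    · exact absurd rfl hne
  have hloc : IsLocallyGood E := ⟨h3, hfree, fun e he p hp q hq => hgood p q
    (by rintro rfl; exact hv e he hp) (by rintro rfl; exact hv e he hq)⟩
  exact hloc.card_lt hv hgood hn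

end BergeK4

theorem stmt_11 (n : ℕ) (hn : 7 ≤ n) (E : Finset (Finset (Fin n)))
    (hsat : IsSaturated E)
    (hmin : ∀ E' : Finset (Finset (Fin n)), IsSaturated E' → E.card ≤ E'.card) :
    ∀ v : Fin n, 1 ≤ hdeg E v := by
  intro v
  by_contra! hv
  have h1 := card_lt_of_hdeg_eq_zero hsat (Nat.lt_one_iff.1 hv) (by simpa)
  obtain ⟨m, rfl⟩ : ∃ m, n = m + 5 := ⟨n - 5, by omega⟩
  obtain ⟨E', _, _, hE', hcard⟩ := exists_isHubSaturated m
  have h2 := hmin E' hE'.saturated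
  rw [Fintype.card_fin] at h1
  omega
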